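/- arXiv:1909.00808 — 3 statements merged into one kernel-verified Lean document; each statement's English description precedes it below -/
import Mathlib

section
/- Suppose β is a torsion potential for g on U. Then for all indices i, j, a, b one has Ω^G_{ij̄ WᵃW̄ᵇ} = −Σ_{m,n} g^{b̄m}·g^{n̄a}·( Ω^g_{ij̄mn̄} − Σ_{l,o} g^{l̄o}·T_{moj̄}·conj(T_{nlī}) ), where Ω^G_{ij̄ WᵃW̄ᵇ} denotes the lowered Chern curvature component of G in the slots (n+a, n+b). -/
open Matrix
open scoped ComplexOrder

noncomputable section

/-- The generalized metric associated to a Hermitian metric `g` and a `(2,0)`-form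
(antisymmetric matrix) `β`, as a `2n × 2n` block matrix on `T ⊕ T*`. -/
def genMetric {n : ℕ} (g β : Matrix (Fin n) (Fin n) ℂ) :
    Matrix (Fin n ⊕ Fin n) (Fin n ⊕ Fin n) ℂ :=
  Matrix.fromBlocks (g + β * (g⁻¹).map (starRingEnd ℂ) * βᴴ) (β * (g⁻¹).map (starRingEnd ℂ))
    ((g⁻¹).map (starRingEnd ℂ) * βᴴ) ((g⁻¹).map (starRingEnd ℂ))

/-- The Wirtinger derivative `∂ᵢ f = ½(∂f/∂xᵢ − i·∂f/∂yᵢ)` of a function `f : ℂⁿ → ℂ`,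
computed via the real Fréchet derivative. -/
def wd {n : ℕ} (i : Fin n) (f : (Fin n → ℂ) → ℂ) (z : Fin n → ℂ) : ℂ :=
  (fderiv ℝ f z (Pi.single i 1) - Complex.I * fderiv ℝ f z (Pi.single i Complex.I)) / 2

/-- The conjugate Wirtinger derivative `∂_{ī} f = ½(∂f/∂xᵢ + i·∂f/∂yᵢ)`. -/
def wdb {n : ℕ} (i : Fin n) (f : (Fin n → ℂ) → ℂ) (z : Fin n → ℂ) : ℂ :=
  (fderiv ℝ f z (Pi.single i 1) + Complex.I * fderiv ℝ f z (Pi.single i Complex.I)) / 2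

/-- Lowered Chern curvature `Ω^h_{ij̄αβ̄} = −∂ᵢ∂_{j̄}h_{αβ̄} + Σ ∂ᵢh_{αγ̄}·h^{γ̄δ}·∂_{j̄}h_{δβ̄}`
of a Hermitian matrix field `h`, where `h^{γ̄δ} = (h⁻¹) γ δ`. -/
def chern {n : ℕ} {ι : Type*} [Fintype ι] [DecidableEq ι]
    (h : (Fin n → ℂ) → Matrix ι ι ℂ) (i j : Fin n) (a b : ι) (z : Fin n → ℂ) : ℂ :=
  - wd i (fun w => wdb j (fun v => h v a b) w) z
    + ∑ c : ι, ∑ d : ι, wd i (fun w => h w a c) z * (h z)⁻¹ c d * wdb j (fun w => h w d b) z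

/-- Chern torsion `T_{ijk̄} = ∂ᵢ g_{jk̄} − ∂ⱼ g_{ik̄}`. -/
def torsion {n : ℕ} (g : (Fin n → ℂ) → Matrix (Fin n) (Fin n) ℂ)
    (i j k : Fin n) (z : Fin n → ℂ) : ℂ :=
  wd i (fun w => g w j k) z - wd j (fun w => g w i k) z

/-- `β` is a torsion potential for `g` on `U`: `∂_{k̄} β_{ij} = T_{ijk̄}` on `U`. -/
def IsTorsionPotential {n : ℕ} (g β : (Fin n → ℂ) → Matrix (Fin n) (Fin n) ℂ)
    (U : Set (Fin n → ℂ)) : Prop :=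
  ∀ z ∈ U, ∀ i j k : Fin n, wdb k (fun w => β w i j) z = torsion g i j k z

/-- Second Chern covariant derivative
`∇ᵢ∇_{j̄}β_{ab} = ∂ᵢ∂_{j̄}β_{ab} − Σ g^{k̄l}·∂ᵢg_{ak̄}·∂_{j̄}β_{lb} − Σ g^{k̄l}·∂ᵢg_{bk̄}·∂_{j̄}β_{al}`. -/
def nabla2beta {n : ℕ} (g β : (Fin n → ℂ) → Matrix (Fin n) (Fin n) ℂ)
    (i j a b : Fin n) (z : Fin n → ℂ) : ℂ :=
  wd i (fun w => wdb j (fun v => β v a b) w) z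
    - ∑ k : Fin n, ∑ l : Fin n, (g z)⁻¹ k l * wd i (fun w => g w a k) z * wdb j (fun w => β w l b) z
    - ∑ k : Fin n, ∑ l : Fin n, (g z)⁻¹ k l * wd i (fun w => g w b k) z * wdb j (fun w => β w a l) z

open Filter Topology

/-- Common form of the two Wirtinger derivatives. -/
def dd {n : ℕ} (c : ℂ) (i : Fin n) (f : (Fin n → ℂ) → ℂ) (z : Fin n → ℂ) : ℂ :=
  (fderiv ℝ f z (Pi.single i 1) + c * fderiv ℝ f z (Pi.single i Complex.I)) / 2

lemma wd_eq_dd {n : ℕ} (i : Fin n) (f : (Fin n → ℂ) → ℂ) : wd i f = dd (-Complex.I) i f := by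
  funext z; simp only [wd, dd]; ring

lemma wdb_eq_dd {n : ℕ} (i : Fin n) (f : (Fin n → ℂ) → ℂ) : wdb i f = dd Complex.I i f := rfl

/-- Entrywise derivative of a matrix field. -/
def dM {n : ℕ} {ι κ : Type*} (c : ℂ) (i : Fin n) (A : (Fin n → ℂ) → Matrix ι κ ℂ)
    (z : Fin n → ℂ) : Matrix ι κ ℂ :=
  Matrix.of fun a b => dd c i (fun w => A w a b) z

lemma dd_congr {n : ℕ} (c : ℂ) (i : Fin n) {f f' : (Fin n → ℂ) → ℂ} {z : Fin n → ℂ}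
    (h : f =ᶠ[𝓝 z] f') : dd c i f z = dd c i f' z := by
  simp only [dd, h.fderiv_eq]

lemma dM_congr {n : ℕ} {ι κ : Type*} (c : ℂ) (i : Fin n)
    {A B : (Fin n → ℂ) → Matrix ι κ ℂ} {z : Fin n → ℂ}
    (h : ∀ᶠ w in 𝓝 z, A w = B w) : dM c i A z = dM c i B z := by
  ext a b
  exact dd_congr c i (h.mono fun w hw => by simp [hw])

lemma dd_mul {n : ℕ} (c : ℂ) (i : Fin n) {f f' : (Fin n → ℂ) → ℂ} {z : Fin n → ℂ}
    (hf : DifferentiableAt ℝ f z) (hf' : DifferentiableAt ℝ f' z) :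
    dd c i (fun w => f w * f' w) z = dd c i f z * f' z + f z * dd c i f' z := by
  simp only [dd, fderiv_fun_mul hf hf']
  simp
  ring

lemma dd_sum {n : ℕ} {ι : Type*} (s : Finset ι) (c : ℂ) (i : Fin n)
    {f : ι → (Fin n → ℂ) → ℂ} {z : Fin n → ℂ}
    (hf : ∀ k ∈ s, DifferentiableAt ℝ (f k) z) :
    dd c i (fun w => ∑ k ∈ s, f k w) z = ∑ k ∈ s, dd c i (f k) z := by
  simp only [dd, fderiv_fun_sum hf]
  simp [Finset.mul_sum, ← Finset.sum_add_distrib, Finset.sum_div]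

/-- Entrywise differentiability. -/
def DA {n : ℕ} {ι κ : Type*} (A : (Fin n → ℂ) → Matrix ι κ ℂ) (z : Fin n → ℂ) : Prop :=
  ∀ a b, DifferentiableAt ℝ (fun w => A w a b) z

lemma DA.mul {n : ℕ} {ι κ τ : Type*} [Fintype κ]
    {A : (Fin n → ℂ) → Matrix ι κ ℂ} {B : (Fin n → ℂ) → Matrix κ τ ℂ} {z : Fin n → ℂ}
    (hA : DA A z) (hB : DA B z) : DA (fun w => A w * B w) z := by
  intro a b
  simp only [Matrix.mul_apply]
  exact DifferentiableAt.fun_sum fun k _ => (hA a k).mul (hB k b)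

lemma dM_mul {n : ℕ} {ι κ τ : Type*} [Fintype κ] (c : ℂ) (i : Fin n)
    {A : (Fin n → ℂ) → Matrix ι κ ℂ} {B : (Fin n → ℂ) → Matrix κ τ ℂ} {z : Fin n → ℂ}
    (hA : DA A z) (hB : DA B z) :
    dM c i (fun w => A w * B w) z = dM c i A z * B z + A z * dM c i B z := by
  ext a b
  simp only [dM, Matrix.of_apply, Matrix.mul_apply, Matrix.add_apply]
  rw [dd_sum (f := fun k w => A w a k * B w k b) _ c i
    (fun k _ => (hA a k).mul (hB k b)), ← Finset.sum_add_distrib]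
  exact Finset.sum_congr rfl fun k _ => dd_mul c i (hA a k) (hB k b)

lemma dM_neg {n : ℕ} {ι κ : Type*} (c : ℂ) (i : Fin n)
    (A : (Fin n → ℂ) → Matrix ι κ ℂ) (z : Fin n → ℂ) :
    dM c i (fun w => - A w) z = - dM c i A z := by
  ext a b
  simp only [dM, dd, Matrix.of_apply, Matrix.neg_apply, fderiv_fun_neg]
  simp
  ring

lemma dM_const {n : ℕ} {ι κ : Type*} (c : ℂ) (i : Fin n)
    (A : Matrix ι κ ℂ) (z : Fin n → ℂ) : dM c i (fun _ => A) z = 0 := by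
  ext a b
  simp [dM, dd]

lemma dM_inv {n : ℕ} {ι : Type*} [Fintype ι] [DecidableEq ι] (c : ℂ) (i : Fin n)
    {K C : (Fin n → ℂ) → Matrix ι ι ℂ} {z : Fin n → ℂ}
    (hK : DA K z) (hC : DA C z) (h : ∀ᶠ w in 𝓝 z, K w * C w = 1) :
    dM c i C z = -(C z * dM c i K z * C z) := by
  have h1 := dM_mul c i hK hC
  rw [dM_congr c i h, dM_const] at h1
  have h2 : C z * K z = 1 := mul_eq_one_comm.mp h.self_of_nhds
  have h3 : C z * (dM c i K z * C z + K z * dM c i C z) = 0 := by rw [← h1, mul_zero]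
  rw [mul_add, ← mul_assoc, ← mul_assoc, h2, one_mul] at h3
  exact eq_neg_of_add_eq_zero_right h3

lemma dd_conj {n : ℕ} (i : Fin n) {f : (Fin n → ℂ) → ℂ} {z : Fin n → ℂ}
    (hf : DifferentiableAt ℝ f z) :
    dd (-Complex.I) i (fun w => (starRingEnd ℂ) (f w)) z
      = (starRingEnd ℂ) (dd Complex.I i f z) := by
  have h : fderiv ℝ (fun w => (starRingEnd ℂ) (f w)) z
      = (Complex.conjCLE : ℂ →L[ℝ] ℂ).comp (fderiv ℝ f z) :=
    ((Complex.conjCLE : ℂ →L[ℝ] ℂ).hasFDerivAt.comp z hf.hasFDerivAt).fderiv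
  simp only [dd, h]
  simp [Complex.conj_ofNat]

lemma contDiffAt_det {n m : ℕ} {A : (Fin n → ℂ) → Matrix (Fin m) (Fin m) ℂ} {z : Fin n → ℂ}
    (hA : ∀ a b, ContDiffAt ℝ 2 (fun w => A w a b) z) :
    ContDiffAt ℝ 2 (fun w => (A w).det) z := by
  simp only [Matrix.det_apply]
  refine ContDiffAt.sum fun σ _ => ?_
  exact ContDiffAt.const_smul _ (contDiffAt_prod fun k _ => hA _ _)

lemma contDiffAt_matInv {n m : ℕ} {A : (Fin n → ℂ) → Matrix (Fin m) (Fin m) ℂ} {z : Fin n → ℂ}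
    (hA : ∀ a b, ContDiffAt ℝ 2 (fun w => A w a b) z) (h0 : (A z).det ≠ 0) (a b : Fin m) :
    ContDiffAt ℝ 2 (fun w => (A w)⁻¹ a b) z := by
  simp only [Matrix.inv_def, Ring.inverse_eq_inv', Matrix.smul_apply, smul_eq_mul,
    Matrix.adjugate_apply]
  refine ((contDiffAt_det hA).inv h0).mul (contDiffAt_det fun p q => ?_)
  by_cases hp : p = b
  · subst hp
    simp only [Matrix.updateRow_self]
    exact contDiffAt_const
  · simp only [Matrix.updateRow_ne hp]
    exact hA p q

lemma differentiableAt_dd {n : ℕ} (c : ℂ) (i : Fin n) {f : (Fin n → ℂ) → ℂ} {z : Fin n → ℂ}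
    (hf : ContDiffAt ℝ 2 f z) : DifferentiableAt ℝ (fun w => dd c i f w) z := by
  have h : DifferentiableAt ℝ (fderiv ℝ f) z :=
    (hf.fderiv_right (m := 1) (by norm_num)).differentiableAt (by norm_num)
  unfold dd
  fun_prop

lemma chern_eq {n : ℕ} {ι : Type*} [Fintype ι] [DecidableEq ι]
    (h : (Fin n → ℂ) → Matrix ι ι ℂ) (i j : Fin n) (a b : ι) (z : Fin n → ℂ) :
    chern h i j a b z = (- dM (-Complex.I) i (dM Complex.I j h) z
      + dM (-Complex.I) i h z * (h z)⁻¹ * dM Complex.I j h z) a b := by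
  simp only [chern, wd_eq_dd, wdb_eq_dd, Matrix.add_apply, Matrix.neg_apply]
  congr 1
  simp only [Matrix.mul_apply, Finset.sum_mul, dM, Matrix.of_apply]
  exact Finset.sum_comm

lemma genMetric_inv {n : ℕ} {g β C : Matrix (Fin n) (Fin n) ℂ}
    (hC : (g⁻¹).map (starRingEnd ℂ) = C) (h1 : gᵀ * C = 1) (h2 : g * g⁻¹ = 1) :
    (genMetric g β)⁻¹ = Matrix.fromBlocks g⁻¹ (-(g⁻¹ * β)) (-(βᴴ * g⁻¹))
      (βᴴ * g⁻¹ * β + gᵀ) := by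
  have h1' : C * gᵀ = 1 := mul_eq_one_comm.mp h1
  apply Matrix.inv_eq_right_inv
  rw [genMetric, hC, Matrix.fromBlocks_multiply, ← Matrix.fromBlocks_one]
  congr 1
  · simp only [add_mul, mul_neg, h2, mul_assoc]; abel
  · simp only [add_mul, mul_add, mul_neg, ← mul_assoc, h2]
    rw [mul_assoc β C gᵀ, h1']; simp only [mul_one, one_mul]; abel
  · simp only [mul_neg, mul_assoc]; abel
  · simp only [mul_add, mul_neg, ← mul_assoc, h1']; abel

/-- curvature of the generalized metric, `W W̄` block:
`Ω^G_{ij̄ WᵃW̄ᵇ} = −Σ g^{b̄m}·g^{n̄a}·(Ω^g_{ij̄mn̄} − Σ g^{l̄o}·T_{moj̄}·conj(T_{nlī}))`. -/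
theorem chern_genMetric_WW {n : ℕ} (hn : 0 < n) (U : Set (Fin n → ℂ)) (hU : IsOpen U)
    (g β : (Fin n → ℂ) → Matrix (Fin n) (Fin n) ℂ)
    (hg : ∀ z ∈ U, (g z).PosDef)
    (hβ : ∀ z ∈ U, (β z)ᵀ = -(β z))
    (hgC2 : ∀ a b : Fin n, ContDiffOn ℝ 2 (fun z => g z a b) U)
    (hβC2 : ∀ a b : Fin n, ContDiffOn ℝ 2 (fun z => β z a b) U)
    (hpot : IsTorsionPotential g β U) :
    ∀ z ∈ U, ∀ i j a b : Fin n,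
      chern (fun w => genMetric (g w) (β w)) i j (Sum.inr a) (Sum.inr b) z =
        - ∑ m : Fin n, ∑ p : Fin n, (g z)⁻¹ b m * (g z)⁻¹ p a *
            (chern g i j m p z -
              ∑ l : Fin n, ∑ o : Fin n,
                (g z)⁻¹ l o * torsion g m o j z * (starRingEnd ℂ) (torsion g p l i z)) := by
  intro z hz i j a b
  have hUz : ∀ᶠ w in 𝓝 z, w ∈ U := hU.mem_nhds hz
  have hunit : ∀ w ∈ U, IsUnit (g w).det := fun w hw => (hg w hw).det_pos.ne'.isUnit
  have hgc : ∀ w ∈ U, ∀ a b, ContDiffAt ℝ 2 (fun z => g z a b) w :=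
    fun w hw a b => (hgC2 a b).contDiffAt (hU.mem_nhds hw)
  have hβc : ∀ w ∈ U, ∀ a b, ContDiffAt ℝ 2 (fun z => β z a b) w :=
    fun w hw a b => (hβC2 a b).contDiffAt (hU.mem_nhds hw)
  -- the fields `C = conj g⁻¹`, `K = gᵀ`, `B = βᴴ`
  obtain ⟨C, hCdef⟩ : ∃ C : (Fin n → ℂ) → Matrix (Fin n) (Fin n) ℂ,
    C = fun w => ((g w)⁻¹).map (starRingEnd ℂ) := ⟨_, rfl⟩
  obtain ⟨K, hKdef⟩ : ∃ K : (Fin n → ℂ) → Matrix (Fin n) (Fin n) ℂ,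
    K = fun w => (g w)ᵀ := ⟨_, rfl⟩
  obtain ⟨B, hBdef⟩ : ∃ B : (Fin n → ℂ) → Matrix (Fin n) (Fin n) ℂ,
    B = fun w => (β w)ᴴ := ⟨_, rfl⟩
  have hCT : ∀ w ∈ U, C w = ((g w)⁻¹)ᵀ := by
    intro w hw
    have hh : ((g w)⁻¹).IsHermitian := (hg w hw).isHermitian.inv
    rw [hCdef]
    ext p q
    exact hh.apply q p
  have hKC : ∀ w ∈ U, K w * C w = 1 := by
    intro w hw
    rw [hCT w hw, hKdef, ← Matrix.transpose_mul, Matrix.nonsing_inv_mul _ (hunit w hw),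
      Matrix.transpose_one]
  have hDK : ∀ w ∈ U, DA K w := by
    intro w hw p q
    rw [hKdef]
    exact (hgc w hw q p).differentiableAt (by norm_num)
  have hDC : ∀ w ∈ U, DA C w := by
    intro w hw p q
    rw [hCdef]
    have h := (contDiffAt_matInv (hgc w hw) (hunit w hw).ne_zero p q).differentiableAt (by norm_num)
    exact (Complex.conjCLE : ℂ →L[ℝ] ℂ).differentiableAt.comp w h
  have hDβ : DA β z := fun p q => (hβc z hz p q).differentiableAt (by norm_num)
  have hDB : DA B z := by
    intro p q
    rw [hBdef]
    exact (Complex.conjCLE : ℂ →L[ℝ] ℂ).differentiableAt.comp z (hDβ q p)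
  have hDdK : DA (dM Complex.I j K) z := by
    intro p q
    rw [hKdef]
    exact differentiableAt_dd Complex.I j (hgc z hz q p)
  -- derivatives of `C`
  have hdC : ∀ c i, ∀ w ∈ U, dM c i C w = -(C w * dM c i K w * C w) := fun c i w hw =>
    dM_inv c i (hDK w hw) (hDC w hw) (Filter.Eventually.mono (hU.mem_nhds hw) hKC)
  have hddC : dM (-Complex.I) i (dM Complex.I j C) z =
      -((dM (-Complex.I) i C z * dM Complex.I j K z
        + C z * dM (-Complex.I) i (dM Complex.I j K) z) * C z
        + C z * dM Complex.I j K z * dM (-Complex.I) i C z) := by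
    rw [dM_congr _ _ (hUz.mono (hdC Complex.I j)), dM_neg,
      dM_mul _ _ ((hDC z hz).mul hDdK) (hDC z hz), dM_mul _ _ (hDC z hz) hDdK]
  have hCK : C z * K z = 1 := mul_eq_one_comm.mp (hKC z hz)
  -- block computation
  have hdG : ∀ c i w, dM c i (fun w => genMetric (g w) (β w)) w =
      Matrix.fromBlocks (dM c i (fun w => g w + β w * C w * B w) w)
        (dM c i (fun w => β w * C w) w) (dM c i (fun w => C w * B w) w) (dM c i C w) := by
    intro c i w
    subst hCdef hBdef
    ext (p | p) (q | q) <;> rfl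
  have hddG : ∀ p q, dM (-Complex.I) i (dM Complex.I j (fun w => genMetric (g w) (β w))) z
      (Sum.inr p) (Sum.inr q) = dM (-Complex.I) i (dM Complex.I j C) z p q := by
    intro p q
    subst hCdef
    rfl
  have hΩ : chern (fun w => genMetric (g w) (β w)) i j (Sum.inr a) (Sum.inr b) z =
      (C z * dM (-Complex.I) i (dM Complex.I j K) z * C z
        - C z * dM Complex.I j K z * C z * dM (-Complex.I) i K z * C z
        + C z * dM (-Complex.I) i B z * (g z)⁻¹ * dM Complex.I j β z * C z) a b := by
    rw [chern_eq, Matrix.add_apply, Matrix.neg_apply, hddG, hdG, hdG,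
      genMetric_inv (C := C z) (by rw [hCdef]) (by have := hKC z hz; rwa [hKdef] at this)
        (Matrix.mul_nonsing_inv _ (hunit z hz)),
      Matrix.fromBlocks_multiply, Matrix.fromBlocks_multiply, Matrix.fromBlocks_apply₂₂,
      ← Matrix.neg_apply, ← Matrix.add_apply]
    refine congrArg (fun M : Matrix (Fin n) (Fin n) ℂ => M a b) ?_
    rw [hddC, dM_mul _ _ (hDC z hz) hDB, dM_mul _ _ hDβ (hDC z hz), hdC _ _ z hz, hdC _ _ z hz]
    have e1 : (β z)ᴴ = B z := by rw [hBdef]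
    have e2 : (g z)ᵀ = K z := by rw [hKdef]
    rw [e1, e2]
    have e3 : ∀ X, C z * (K z * X) = X := fun X => by rw [← mul_assoc, hCK, one_mul]
    simp only [mul_add, add_mul, mul_neg, neg_mul, neg_neg, neg_add, mul_assoc, e3]
    abel
  rw [hΩ]
  have hCe : ∀ p q, C z p q = (g z)⁻¹ q p := fun p q => by rw [hCT z hz]; rfl
  have hdB : ∀ p q, dM (-Complex.I) i B z p q = (starRingEnd ℂ) (torsion g q p i z) := by
    intro p q
    rw [← hpot z hz, wdb_eq_dd, ← dd_conj i (hDβ q p), hBdef]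
    rfl
  have hdβ : ∀ p q, dM Complex.I j β z p q = torsion g p q j z := by
    intro p q
    rw [← hpot z hz]; rfl
  have hanti : ∀ p q k, torsion g p q k z = - torsion g q p k z := by
    intro p q k; simp only [torsion]; ring
  -- matrix of the bracket on the right-hand side
  have hM : ∀ m p, chern g i j m p z - ∑ l : Fin n, ∑ o : Fin n,
        (g z)⁻¹ l o * torsion g m o j z * (starRingEnd ℂ) (torsion g p l i z) =
      -(dM (-Complex.I) i (dM Complex.I j K) z
        - dM Complex.I j K z * C z * dM (-Complex.I) i K z
        + dM (-Complex.I) i B z * (g z)⁻¹ * dM Complex.I j β z) p m := by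
    intro m p
    have t1 : dM (-Complex.I) i (dM Complex.I j K) z p m
        = dM (-Complex.I) i (dM Complex.I j g) z m p := by rw [hKdef]; rfl
    have t2 : (dM Complex.I j K z * C z * dM (-Complex.I) i K z) p m
        = (dM (-Complex.I) i g z * (g z)⁻¹ * dM Complex.I j g z) m p := by
      have : dM Complex.I j K z * C z * dM (-Complex.I) i K z
          = (dM (-Complex.I) i g z * (g z)⁻¹ * dM Complex.I j g z)ᵀ := by
        rw [Matrix.transpose_mul, Matrix.transpose_mul, hCT z hz, hKdef, mul_assoc]; rfl
      rw [this]; rfl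
    have t3 : (dM (-Complex.I) i B z * (g z)⁻¹ * dM Complex.I j β z) p m
        = ∑ l : Fin n, ∑ o : Fin n,
        (g z)⁻¹ l o * torsion g m o j z * (starRingEnd ℂ) (torsion g p l i z) := by
      simp only [Matrix.mul_apply, Finset.sum_mul, hdB, hdβ]
      rw [Finset.sum_comm]
      refine Finset.sum_congr rfl fun l _ => Finset.sum_congr rfl fun o _ => ?_
      rw [hanti m o, hanti p l, map_neg]; ring
    rw [chern_eq, Matrix.add_apply, Matrix.neg_apply, Matrix.add_apply, Matrix.sub_apply,
      t1, t2, t3]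
    ring
  simp only [hM]
  have hfac : C z * dM (-Complex.I) i (dM Complex.I j K) z * C z
        - C z * dM Complex.I j K z * C z * dM (-Complex.I) i K z * C z
        + C z * dM (-Complex.I) i B z * (g z)⁻¹ * dM Complex.I j β z * C z
      = C z * (dM (-Complex.I) i (dM Complex.I j K) z
        - dM Complex.I j K z * C z * dM (-Complex.I) i K z
        + dM (-Complex.I) i B z * (g z)⁻¹ * dM Complex.I j β z) * C z := by
    simp only [mul_add, add_mul, mul_sub, sub_mul, mul_assoc]
  rw [hfac, Matrix.mul_apply]
  simp only [Matrix.mul_apply (M := C z), Finset.sum_mul, hCe, ← Finset.sum_neg_distrib]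
  refine Finset.sum_congr rfl fun m _ => Finset.sum_congr rfl fun p _ => ?_
  ring
end
end

section
/- Let γ: U → Mₙ(ℂ) and G: U → GL_{2n}(ℂ) be differentiable (in the real sense), let N(γ) denote the 2n×2n block matrix [[0,0],[γ,0]], and set G̃ := (I − N(conj γ))·G·(I + N(γ)), where conj is entrywise conjugation. Then G̃ takes values in GL_{2n}(ℂ) and for every i the Christoffel matrices transform as: G̃⁻¹·∂ᵢG̃ = (I − N(γ))·( −G⁻¹·N(∂ᵢ(conj γ))·G + G⁻¹·∂ᵢG )·(I + N(γ)) + N(∂ᵢγ). -/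
open Matrix

noncomputable section

/-- Entrywise Wirtinger derivative of a matrix-valued map. -/
def wdM {n : ℕ} {ι κ : Type*} (i : Fin n) (A : (Fin n → ℂ) → Matrix ι κ ℂ)
    (z : Fin n → ℂ) : Matrix ι κ ℂ :=
  Matrix.of fun a b => wd i (fun w => A w a b) z

/-- Entrywise conjugate Wirtinger derivative of a matrix-valued map. -/
def wdbM {n : ℕ} {ι κ : Type*} (i : Fin n) (A : (Fin n → ℂ) → Matrix ι κ ℂ)
    (z : Fin n → ℂ) : Matrix ι κ ℂ :=
  Matrix.of fun a b => wdb i (fun w => A w a b) z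

/-- The block matrix `N(γ) = [[0,0],[γ,0]]`. -/
def Nmat {n : ℕ} (γ : Matrix (Fin n) (Fin n) ℂ) :
    Matrix (Fin n ⊕ Fin n) (Fin n ⊕ Fin n) ℂ :=
  Matrix.fromBlocks 0 0 γ 0

theorem wdM_mul {n : ℕ} {ι : Type*} [Fintype ι] (i : Fin n)
    (A B : (Fin n → ℂ) → Matrix ι ι ℂ) (z : Fin n → ℂ)
    (hA : ∀ a b, DifferentiableAt ℝ (fun w => A w a b) z)
    (hB : ∀ a b, DifferentiableAt ℝ (fun w => B w a b) z) :
    wdM i (fun w => A w * B w) z = wdM i A z * B z + A z * wdM i B z := by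
  ext a b
  have h : fderiv ℝ (fun w => (A w * B w) a b) z =
      ∑ c, (A z a c • fderiv ℝ (fun w => B w c b) z +
        B z c b • fderiv ℝ (fun w => A w a c) z) := by
    simp only [Matrix.mul_apply]
    rw [fderiv_fun_sum (fun c _ => (hA a c).fun_mul (hB c b))]
    exact Finset.sum_congr rfl fun c _ => fderiv_fun_mul (hA a c) (hB c b)
  simp only [wdM, wd, Matrix.of_apply, Matrix.add_apply, h]
  simp only [Matrix.mul_apply, Matrix.of_apply, _root_.sum_apply,
    _root_.add_apply, _root_.smul_apply, smul_eq_mul,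
    Finset.mul_sum, ← Finset.sum_sub_distrib, Finset.sum_div, ← Finset.sum_add_distrib]
  exact Finset.sum_congr rfl fun c _ => by ring

theorem diff_mul {n : ℕ} {ι : Type*} [Fintype ι]
    (A B : (Fin n → ℂ) → Matrix ι ι ℂ) (z : Fin n → ℂ)
    (hA : ∀ a b, DifferentiableAt ℝ (fun w => A w a b) z)
    (hB : ∀ a b, DifferentiableAt ℝ (fun w => B w a b) z) (a b : ι) :
    DifferentiableAt ℝ (fun w => (A w * B w) a b) z := by
  simp only [Matrix.mul_apply]
  exact DifferentiableAt.fun_sum fun c _ => (hA a c).mul (hB c b)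

theorem diff_Nmat {n : ℕ} (γ : (Fin n → ℂ) → Matrix (Fin n) (Fin n) ℂ) (z : Fin n → ℂ)
    (h : ∀ a b, DifferentiableAt ℝ (fun w => γ w a b) z) (a b : Fin n ⊕ Fin n) :
    DifferentiableAt ℝ (fun w => Nmat (γ w) a b) z := by
  rcases a with a | a <;> rcases b with b | b <;> simp [Nmat, h]

theorem wdM_one_add_Nmat {n : ℕ} (i : Fin n) (γ : (Fin n → ℂ) → Matrix (Fin n) (Fin n) ℂ)
    (z : Fin n → ℂ) :
    wdM i (fun w => 1 + Nmat (γ w)) z = Nmat (wdM i γ z) := by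
  ext a b
  rcases a with a | a <;> rcases b with b | b <;>
    simp [Nmat, wdM, wd, Matrix.one_apply]

theorem wdM_one_sub_Nmat {n : ℕ} (i : Fin n) (γ : (Fin n → ℂ) → Matrix (Fin n) (Fin n) ℂ)
    (z : Fin n → ℂ) :
    wdM i (fun w => 1 - Nmat (γ w)) z = -Nmat (wdM i γ z) := by
  ext a b
  rcases a with a | a <;> rcases b with b | b <;>
    simp [Nmat, wdM, wd, Matrix.one_apply]
  ring

theorem Nmat_mul {n : ℕ} (a b : Matrix (Fin n) (Fin n) ℂ) : Nmat a * Nmat b = 0 := by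
  simp [Nmat, Matrix.fromBlocks_multiply]

/-- transformation rule for Christoffel matrices under a B-field
transformation `G̃ = (I − N(conj γ))·G·(I + N(γ))`:
`G̃` is invertible and
`G̃⁻¹·∂ᵢG̃ = (I − N(γ))·(−G⁻¹·N(∂ᵢ(conj γ))·G + G⁻¹·∂ᵢG)·(I + N(γ)) + N(∂ᵢγ)`. -/
theorem christoffel_bField {n : ℕ} (hn : 0 < n)
    (U : Set (Fin n → ℂ)) (hU : IsOpen U)
    (γ : (Fin n → ℂ) → Matrix (Fin n) (Fin n) ℂ)
    (G : (Fin n → ℂ) → Matrix (Fin n ⊕ Fin n) (Fin n ⊕ Fin n) ℂ)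
    (hγdiff : ∀ a b : Fin n, DifferentiableOn ℝ (fun z => γ z a b) U)
    (hGdiff : ∀ A B : Fin n ⊕ Fin n, DifferentiableOn ℝ (fun z => G z A B) U)
    (hGinv : ∀ z ∈ U, IsUnit (G z)) :
    (∀ z ∈ U, IsUnit ((1 - Nmat ((γ z).map (starRingEnd ℂ))) * G z * (1 + Nmat (γ z)))) ∧
    (∀ z ∈ U, ∀ i : Fin n,
      (((1 - Nmat ((γ z).map (starRingEnd ℂ))) * G z * (1 + Nmat (γ z)))⁻¹ *
          wdM i (fun w => (1 - Nmat ((γ w).map (starRingEnd ℂ))) * G w * (1 + Nmat (γ w))) z) =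
        (1 - Nmat (γ z)) *
            (-((G z)⁻¹ * Nmat (wdM i (fun w => (γ w).map (starRingEnd ℂ)) z) * G z) +
              (G z)⁻¹ * wdM i G z) * (1 + Nmat (γ z)) +
          Nmat (wdM i γ z)) := by
  have e1 : ∀ a : Matrix (Fin n) (Fin n) ℂ, (1 - Nmat a) * (1 + Nmat a) = 1 := fun a => by
    simp [sub_mul, mul_add, Nmat_mul]
  have e2 : ∀ a : Matrix (Fin n) (Fin n) ℂ, (1 + Nmat a) * (1 - Nmat a) = 1 := fun a => by
    simp [mul_sub, add_mul, Nmat_mul]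
  have u1 : ∀ a : Matrix (Fin n) (Fin n) ℂ, IsUnit (1 - Nmat a) := fun a =>
    ⟨⟨_, _, e1 a, e2 a⟩, rfl⟩
  have u2 : ∀ a : Matrix (Fin n) (Fin n) ℂ, IsUnit (1 + Nmat a) := fun a =>
    ⟨⟨_, _, e2 a, e1 a⟩, rfl⟩
  refine ⟨fun z hz => ((u1 _).mul (hGinv z hz)).mul (u2 _), fun z hz i => ?_⟩
  have hγ : ∀ a b, DifferentiableAt ℝ (fun w => γ w a b) z := fun a b =>
    (hγdiff a b).differentiableAt (hU.mem_nhds hz)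
  have hG : ∀ a b, DifferentiableAt ℝ (fun w => G w a b) z := fun a b =>
    (hGdiff a b).differentiableAt (hU.mem_nhds hz)
  have hc : ∀ a b, DifferentiableAt ℝ (fun w => ((γ w).map (starRingEnd ℂ)) a b) z :=
    fun a b => Complex.conjCLE.differentiableAt.comp z (hγ a b)
  have hL : ∀ a b, DifferentiableAt ℝ
      (fun w => (1 - Nmat ((γ w).map (starRingEnd ℂ))) a b) z := fun a b =>
    (differentiableAt_const _).sub (diff_Nmat _ z hc a b)
  have hR : ∀ a b, DifferentiableAt ℝ (fun w => (1 + Nmat (γ w)) a b) z := fun a b =>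
    (differentiableAt_const _).add (diff_Nmat _ z hγ a b)
  rw [wdM_mul i (fun w => (1 - Nmat ((γ w).map (starRingEnd ℂ))) * G w) _ z
      (diff_mul _ _ z hL hG) hR, wdM_mul i _ G z hL hG, wdM_one_add_Nmat,
    wdM_one_sub_Nmat i (fun w => (γ w).map (starRingEnd ℂ))]
  have hdet := (Matrix.isUnit_iff_isUnit_det _).1 (hGinv z hz)
  have g1 := Matrix.nonsing_inv_mul _ hdet
  rw [Matrix.mul_inv_rev, Matrix.mul_inv_rev, Matrix.inv_eq_left_inv (e1 (γ z)),
    Matrix.inv_eq_left_inv (e2 ((γ z).map (starRingEnd ℂ)))]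
  generalize wdM i (fun w => (γ w).map (starRingEnd ℂ)) z = dc
  generalize wdM i G z = dG
  generalize wdM i γ z = dγ
  generalize (γ z).map (starRingEnd ℂ) = c
  generalize γ z = g at *
  generalize (G z)⁻¹ = K at *
  generalize G z = H at *
  have f1 : (1 + Nmat c) * Nmat dc = Nmat dc := by simp [add_mul, Nmat_mul]
  have f2 : (1 - Nmat g) * Nmat dγ = Nmat dγ := by simp [sub_mul, Nmat_mul]
  have f3 := e2 c
  generalize hP : 1 + Nmat c = P at *
  generalize hQ : 1 - Nmat c = Q at *
  generalize hR : 1 + Nmat g = R at *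
  generalize hS : 1 - Nmat g = S at *
  calc _ = S * (-(K * (P * Nmat dc) * H) + K * (P * Q) * dG) * R
        + S * (K * (P * Q) * H) * Nmat dγ := by noncomm_ring
    _ = _ := by rw [f1, f3, mul_one, g1, mul_one, f2]
end
end

section
/- Under pluriclosed flow the generalized metric evolves by ∂ₜG = −S: if g: I×U → (n×n Hermitian positive-definite matrices) and β: I×U → (n×n antisymmetric matrices) are smooth, β(t,·) is a torsion potential for g(t,·) for every t, and the pluriclosed flow equations hold in coordinates, ∂ₜg_{ij̄} = −S^g_{ij̄} + T²_{ij̄} and ∂ₜβ_{ij} = Δ_gβ_{ij}, then the generalized metric G(t,z) := G(g(t,z), β(t,z)) satisfies ∂ₜG_{AB̄} = −S_{AB̄} at every point of I×U and for all indices A, B ∈ {1,…,2n}, where S_{AB̄} := Σ_{i,j} g^{j̄i}·Ω^G_{ij̄AB̄}. -/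
open Matrix
open scoped ComplexOrder

noncomputable section

/-- Spatial Wirtinger derivative `∂ᵢ f = ½(∂f/∂xᵢ − i·∂f/∂yᵢ)` of `f : ℝ × ℂⁿ → ℂ`,
computed via the real Fréchet derivative in the spatial directions. -/
def wdP {n : ℕ} (i : Fin n) (f : ℝ × (Fin n → ℂ) → ℂ) (p : ℝ × (Fin n → ℂ)) : ℂ :=
  (fderiv ℝ f p (0, Pi.single i 1) - Complex.I * fderiv ℝ f p (0, Pi.single i Complex.I)) / 2

/-- Spatial conjugate Wirtinger derivative `∂_{ī} f = ½(∂f/∂xᵢ + i·∂f/∂yᵢ)`. -/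
def wdbP {n : ℕ} (i : Fin n) (f : ℝ × (Fin n → ℂ) → ℂ) (p : ℝ × (Fin n → ℂ)) : ℂ :=
  (fderiv ℝ f p (0, Pi.single i 1) + Complex.I * fderiv ℝ f p (0, Pi.single i Complex.I)) / 2

/-- Time derivative `∂ₜ f` of `f : ℝ × ℂⁿ → ℂ`. -/
def dtP {n : ℕ} (f : ℝ × (Fin n → ℂ) → ℂ) (p : ℝ × (Fin n → ℂ)) : ℂ :=
  fderiv ℝ f p (1, 0)

/-- Entrywise spatial Wirtinger derivative of a matrix-valued map. -/
def wdPM {n : ℕ} {ι κ : Type*} (i : Fin n) (A : ℝ × (Fin n → ℂ) → Matrix ι κ ℂ)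
    (p : ℝ × (Fin n → ℂ)) : Matrix ι κ ℂ :=
  Matrix.of fun a b => wdP i (fun q => A q a b) p

/-- Entrywise spatial conjugate Wirtinger derivative of a matrix-valued map. -/
def wdbPM {n : ℕ} {ι κ : Type*} (i : Fin n) (A : ℝ × (Fin n → ℂ) → Matrix ι κ ℂ)
    (p : ℝ × (Fin n → ℂ)) : Matrix ι κ ℂ :=
  Matrix.of fun a b => wdbP i (fun q => A q a b) p

/-- Entrywise time derivative of a matrix-valued map. -/
def dtPM {n : ℕ} {ι κ : Type*} (A : ℝ × (Fin n → ℂ) → Matrix ι κ ℂ)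
    (p : ℝ × (Fin n → ℂ)) : Matrix ι κ ℂ :=
  Matrix.of fun a b => dtP (fun q => A q a b) p

/-- Lowered Chern curvature `Ω^h_{ij̄αβ̄} = −∂ᵢ∂_{j̄}h_{αβ̄} + Σ ∂ᵢh_{αγ̄}·h^{γ̄δ}·∂_{j̄}h_{δβ̄}`
of a (time-dependent) Hermitian matrix field `h`, where `h^{γ̄δ} = (h⁻¹) γ δ`. -/
def chernP {n : ℕ} {ι : Type*} [Fintype ι] [DecidableEq ι]
    (h : ℝ × (Fin n → ℂ) → Matrix ι ι ℂ) (i j : Fin n) (a b : ι) (p : ℝ × (Fin n → ℂ)) : ℂ :=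
  - wdP i (fun q => wdbP j (fun r => h r a b) q) p
    + ∑ c : ι, ∑ d : ι, wdP i (fun q => h q a c) p * (h p)⁻¹ c d * wdbP j (fun q => h q d b) p

/-- Chern torsion `T_{ijk̄} = ∂ᵢ g_{jk̄} − ∂ⱼ g_{ik̄}`. -/
def torsionP {n : ℕ} (g : ℝ × (Fin n → ℂ) → Matrix (Fin n) (Fin n) ℂ)
    (i j k : Fin n) (p : ℝ × (Fin n → ℂ)) : ℂ :=
  wdP i (fun q => g q j k) p - wdP j (fun q => g q i k) p

/-- Trace with respect to `g` of the lowered Chern curvature of `h`: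
`Σ g^{j̄i}·Ω^h_{ij̄ab̄}`. -/
def traceChernP {n : ℕ} {ι : Type*} [Fintype ι] [DecidableEq ι]
    (g : ℝ × (Fin n → ℂ) → Matrix (Fin n) (Fin n) ℂ)
    (h : ℝ × (Fin n → ℂ) → Matrix ι ι ℂ) (a b : ι) (p : ℝ × (Fin n → ℂ)) : ℂ :=
  ∑ i : Fin n, ∑ j : Fin n, (g p)⁻¹ j i * chernP h i j a b p

/-- `T²_{ab̄} = Σ T_{aln̄}·conj(T_{bkm̄})·g^{k̄l}·g^{n̄m}`. -/
def torsionSqP {n : ℕ} (g : ℝ × (Fin n → ℂ) → Matrix (Fin n) (Fin n) ℂ)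
    (a b : Fin n) (p : ℝ × (Fin n → ℂ)) : ℂ :=
  ∑ k : Fin n, ∑ l : Fin n, ∑ m : Fin n, ∑ m' : Fin n,
    torsionP g a l m' p * (starRingEnd ℂ) (torsionP g b k m p) * (g p)⁻¹ k l * (g p)⁻¹ m' m

/-- Second Chern covariant derivative
`∇ᵢ∇_{j̄}β_{ab} = ∂ᵢ∂_{j̄}β_{ab} − Σ g^{k̄l}·∂ᵢg_{ak̄}·∂_{j̄}β_{lb} − Σ g^{k̄l}·∂ᵢg_{bk̄}·∂_{j̄}β_{al}`. -/
def nabla2betaP {n : ℕ} (g β : ℝ × (Fin n → ℂ) → Matrix (Fin n) (Fin n) ℂ)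
    (i j a b : Fin n) (p : ℝ × (Fin n → ℂ)) : ℂ :=
  wdP i (fun q => wdbP j (fun r => β r a b) q) p
    - ∑ k : Fin n, ∑ l : Fin n,
        (g p)⁻¹ k l * wdP i (fun q => g q a k) p * wdbP j (fun q => β q l b) p
    - ∑ k : Fin n, ∑ l : Fin n,
        (g p)⁻¹ k l * wdP i (fun q => g q b k) p * wdbP j (fun q => β q a l) p

/-- `Δ_g β_{ab} = Σ g^{j̄i}·∇ᵢ∇_{j̄}β_{ab}`. -/
def lapBetaP {n : ℕ} (g β : ℝ × (Fin n → ℂ) → Matrix (Fin n) (Fin n) ℂ)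
    (a b : Fin n) (p : ℝ × (Fin n → ℂ)) : ℂ :=
  ∑ i : Fin n, ∑ j : Fin n, (g p)⁻¹ j i * nabla2betaP g β i j a b p

/-! ### A general first-order operator -/

/-- First order operator `f ↦ a ∂_v f + b ∂_w f`. -/
def dOp {E : Type*} [NormedAddCommGroup E] [NormedSpace ℝ E] (c : (ℂ × ℂ) × (E × E))
    (f : E → ℂ) (p : E) : ℂ :=
  c.1.1 * fderiv ℝ f p c.2.1 + c.1.2 * fderiv ℝ f p c.2.2

/-- Entrywise version of `dOp`. -/
def dOpM {E : Type*} [NormedAddCommGroup E] [NormedSpace ℝ E] {ι κ : Type*}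
    (c : (ℂ × ℂ) × (E × E)) (A : E → Matrix ι κ ℂ) (p : E) : Matrix ι κ ℂ :=
  Matrix.of fun a b => dOp c (fun q => A q a b) p

/-- Conjugate operator. -/
def cjOp {E : Type*} (c : (ℂ × ℂ) × (E × E)) : (ℂ × ℂ) × (E × E) :=
  ((starRingEnd ℂ c.1.1, starRingEnd ℂ c.1.2), c.2)

/-- Entrywise smoothness on `s`. -/
def SmM {E : Type*} [NormedAddCommGroup E] [NormedSpace ℝ E] {ι κ : Type*}
    (s : Set E) (A : E → Matrix ι κ ℂ) : Prop :=
  ∀ a b, ContDiffOn ℝ (⊤ : ℕ∞) (fun q => A q a b) s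

section general

variable {E : Type*} [NormedAddCommGroup E] [NormedSpace ℝ E] {ι κ μ : Type*}
variable {s : Set E} {p : E}

lemma smooth_diffAt {f : E → ℂ} (hs : IsOpen s) (hf : ContDiffOn ℝ (⊤ : ℕ∞) f s) (hp : p ∈ s) :
    DifferentiableAt ℝ f p :=
  (hf.contDiffAt (hs.mem_nhds hp)).differentiableAt (by simp)

lemma dOp_congr (hs : IsOpen s) (hp : p ∈ s) (c) {f g : E → ℂ} (h : ∀ q ∈ s, f q = g q) :
    dOp c f p = dOp c g p := by
  have : f =ᶠ[nhds p] g := Filter.eventuallyEq_of_mem (hs.mem_nhds hp) h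
  simp only [dOp, this.fderiv_eq]

lemma dOpM_congr (hs : IsOpen s) (hp : p ∈ s) (c) {A B : E → Matrix ι κ ℂ}
    (h : ∀ q ∈ s, A q = B q) : dOpM c A p = dOpM c B p := by
  ext a b
  exact dOp_congr hs hp c (fun q hq => by rw [h q hq])

lemma dOp_smooth (hs : IsOpen s) (c) {f : E → ℂ} (hf : ContDiffOn ℝ (⊤ : ℕ∞) f s) :
    ContDiffOn ℝ (⊤ : ℕ∞) (dOp c f) s := by
  have h : ContDiffOn ℝ (⊤ : ℕ∞) (fderiv ℝ f) s := hf.fderiv_of_isOpen hs (by simp)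
  unfold dOp
  exact (contDiffOn_const.mul (h.clm_apply contDiffOn_const)).add
    (contDiffOn_const.mul (h.clm_apply contDiffOn_const))

lemma dOpM_smooth (hs : IsOpen s) (c) {A : E → Matrix ι κ ℂ} (hA : SmM s A) :
    SmM s (dOpM c A) := fun a b => dOp_smooth hs c (hA a b)

lemma dOp_mul {f g : E → ℂ} (c) (hf : DifferentiableAt ℝ f p) (hg : DifferentiableAt ℝ g p) :
    dOp c (fun q => f q * g q) p = dOp c f p * g p + f p * dOp c g p := by
  simp only [dOp, fderiv_fun_mul hf hg]
  simp
  ring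

lemma dOp_add {f g : E → ℂ} (c) (hf : DifferentiableAt ℝ f p) (hg : DifferentiableAt ℝ g p) :
    dOp c (fun q => f q + g q) p = dOp c f p + dOp c g p := by
  simp only [dOp, fderiv_fun_add hf hg]
  simp
  ring

lemma dOp_neg {f : E → ℂ} (c) :
    dOp c (fun q => - f q) p = - dOp c f p := by
  simp only [dOp, fderiv_fun_neg]
  simp
  ring

lemma dOp_const (c) (z : ℂ) : dOp c (fun _ : E => z) p = 0 := by
  simp [dOp]

lemma dOp_sum {σ : Type*} (t : Finset σ) (c) {f : σ → E → ℂ}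
    (hf : ∀ i, DifferentiableAt ℝ (f i) p) :
    dOp c (fun q => ∑ i ∈ t, f i q) p = ∑ i ∈ t, dOp c (f i) p := by
  simp only [dOp, fderiv_fun_sum (fun i _ => hf i)]
  simp [Finset.mul_sum, Finset.sum_add_distrib]

lemma dOp_conj {f : E → ℂ} (c) (hf : DifferentiableAt ℝ f p) :
    dOp c (fun q => starRingEnd ℂ (f q)) p = starRingEnd ℂ (dOp (cjOp c) f p) := by
  have h : fderiv ℝ (fun q => starRingEnd ℂ (f q)) p
      = (Complex.conjCLE : ℂ →L[ℝ] ℂ).comp (fderiv ℝ f p) := by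
    have := (Complex.conjCLE : ℂ →L[ℝ] ℂ).hasFDerivAt.comp p hf.hasFDerivAt
    exact this.fderiv
  simp only [dOp, h]
  simp [cjOp]

lemma fderiv_dOp (hs : IsOpen s) (hp : p ∈ s) (c) {f : E → ℂ}
    (hf : ContDiffOn ℝ (⊤ : ℕ∞) f s) (v : E) :
    fderiv ℝ (dOp c f) p v = c.1.1 * fderiv ℝ (fderiv ℝ f) p v c.2.1
      + c.1.2 * fderiv ℝ (fderiv ℝ f) p v c.2.2 := by
  have h : ContDiffOn ℝ (⊤ : ℕ∞) (fderiv ℝ f) s := hf.fderiv_of_isOpen hs (by simp)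
  have hd : DifferentiableAt ℝ (fderiv ℝ f) p :=
    (h.contDiffAt (hs.mem_nhds hp)).differentiableAt (by simp)
  have h1 : ∀ w, HasFDerivAt (fun q => fderiv ℝ f q w)
      ((fderiv ℝ (fderiv ℝ f) p).flip w) p := fun w => by
    simpa using hd.hasFDerivAt.clm_apply (hasFDerivAt_const w p)
  have h2 := ((h1 c.2.1).const_mul c.1.1).add ((h1 c.2.2).const_mul c.1.2)
  have h3 : fderiv ℝ (dOp c f) p = _ := h2.fderiv
  rw [h3]
  simp

lemma dOp_comm (hs : IsOpen s) (hp : p ∈ s) (c d) {f : E → ℂ}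
    (hf : ContDiffOn ℝ (⊤ : ℕ∞) f s) :
    dOp c (dOp d f) p = dOp d (dOp c f) p := by
  have hsym : IsSymmSndFDerivAt ℝ f p :=
    (hf.contDiffAt (hs.mem_nhds hp)).isSymmSndFDerivAt (by
      simp only [minSmoothness_of_isRCLikeNormedField]
      exact WithTop.coe_le_coe.2 (le_top : (2 : ℕ∞) ≤ ⊤))
  rw [dOp, dOp]
  simp only [fderiv_dOp hs hp _ hf]
  rw [hsym.eq c.2.1 d.2.1, hsym.eq c.2.1 d.2.2, hsym.eq c.2.2 d.2.1, hsym.eq c.2.2 d.2.2]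
  ring

lemma dOpM_comm (hs : IsOpen s) (hp : p ∈ s) (c d) {A : E → Matrix ι κ ℂ} (hA : SmM s A) :
    dOpM c (dOpM d A) p = dOpM d (dOpM c A) p := by
  ext a b
  exact dOp_comm hs hp c d (hA a b)

lemma SmM.diff {A : E → Matrix ι κ ℂ} (hA : SmM s A) (hs : IsOpen s) (hp : p ∈ s) (a b) :
    DifferentiableAt ℝ (fun q => A q a b) p := smooth_diffAt hs (hA a b) hp

lemma SmM.mul [Fintype κ] {A : E → Matrix ι κ ℂ} {B : E → Matrix κ μ ℂ}
    (hA : SmM s A) (hB : SmM s B) : SmM s (fun q => A q * B q) := by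
  intro a b
  simp only [Matrix.mul_apply]
  exact ContDiffOn.sum fun i _ => (hA a i).mul (hB i b)

lemma dOpM_mul [Fintype κ] {A : E → Matrix ι κ ℂ} {B : E → Matrix κ μ ℂ} (hs : IsOpen s)
    (hp : p ∈ s) (c) (hA : SmM s A) (hB : SmM s B) :
    dOpM c (fun q => A q * B q) p = dOpM c A p * B p + A p * dOpM c B p := by
  ext a b
  simp only [dOpM, Matrix.mul_apply, Matrix.of_apply, Matrix.add_apply]
  rw [dOp_sum (f := fun i q => A q a i * B q i b) _ _ (fun i => (hA.diff hs hp a i).mul (hB.diff hs hp i b)),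
    ← Finset.sum_add_distrib]
  exact Finset.sum_congr rfl fun i _ => dOp_mul c (hA.diff hs hp a i) (hB.diff hs hp i b)

lemma dOpM_add {A B : E → Matrix ι κ ℂ} (hs : IsOpen s)
    (hp : p ∈ s) (c) (hA : SmM s A) (hB : SmM s B) :
    dOpM c (fun q => A q + B q) p = dOpM c A p + dOpM c B p := by
  ext a b
  exact dOp_add c (hA.diff hs hp a b) (hB.diff hs hp a b)

lemma SmM.add {A B : E → Matrix ι κ ℂ} (hA : SmM s A) (hB : SmM s B) :
    SmM s (fun q => A q + B q) := fun a b => (hA a b).add (hB a b)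

lemma dOpM_neg {A : E → Matrix ι κ ℂ} (c) :
    dOpM c (fun q => - A q) p = - dOpM c A p := by
  ext a b
  exact dOp_neg c

lemma dOpM_transpose {A : E → Matrix ι κ ℂ} (c) :
    dOpM c (fun q => (A q)ᵀ) p = (dOpM c A p)ᵀ := rfl

lemma SmM.transpose {A : E → Matrix ι κ ℂ} (hA : SmM s A) :
    SmM s (fun q => (A q)ᵀ) := fun a b => hA b a

lemma SmM.conjTranspose {A : E → Matrix ι κ ℂ} (hA : SmM s A) :
    SmM s (fun q => (A q)ᴴ) := fun a b =>
  (Complex.conjCLE : ℂ →L[ℝ] ℂ).contDiff.comp_contDiffOn (hA b a)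

lemma dOpM_conjTranspose {A : E → Matrix ι κ ℂ} (hs : IsOpen s)
    (hp : p ∈ s) (c) (hA : SmM s A) :
    dOpM c (fun q => (A q)ᴴ) p = (dOpM (cjOp c) A p)ᴴ := by
  ext a b
  exact dOp_conj c (hA.diff hs hp b a)

lemma dOpM_const (c) (Z : Matrix ι κ ℂ) : dOpM c (fun _ : E => Z) p = 0 := by
  ext a b
  exact dOp_const c _

lemma smM_const (Z : Matrix ι κ ℂ) : SmM s (fun _ : E => Z) := fun _ _ => contDiffOn_const

lemma SmM.congr {A B : E → Matrix ι κ ℂ} (hA : SmM s A) (h : ∀ q ∈ s, B q = A q) : SmM s B :=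
  fun a b => (hA a b).congr fun q hq => by rw [h q hq]

lemma SmM.det [Fintype ι] [DecidableEq ι] {A : E → Matrix ι ι ℂ} (hA : SmM s A) :
    ContDiffOn ℝ (⊤ : ℕ∞) (fun q => (A q).det) s := by
  simp only [Matrix.det_apply']
  exact ContDiffOn.sum fun σ _ => contDiffOn_const.mul (contDiffOn_prod fun i _ => hA _ _)

lemma SmM.inv [Fintype ι] [DecidableEq ι] {A : E → Matrix ι ι ℂ} (hA : SmM s A)
    (h : ∀ q ∈ s, IsUnit (A q).det) : SmM s (fun q => (A q)⁻¹) := by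
  intro a b
  simp only [Matrix.inv_def, Ring.inverse_eq_inv', Matrix.smul_apply, smul_eq_mul,
    Matrix.adjugate_apply]
  refine (hA.det.inv fun q hq => (h q hq).ne_zero).mul ?_
  apply SmM.det
  intro x y
  by_cases hx : x = b
  · subst hx
    simpa using contDiffOn_const
  · simpa [Matrix.updateRow_ne hx] using hA x y

lemma dOpM_inv [Fintype ι] [DecidableEq ι] {A : E → Matrix ι ι ℂ} (hs : IsOpen s)
    (hp : p ∈ s) (c) (hA : SmM s A) (h : ∀ q ∈ s, IsUnit (A q).det) :
    dOpM c (fun q => (A q)⁻¹) p = - ((A p)⁻¹ * dOpM c A p * (A p)⁻¹) := by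
  have h1 := dOpM_mul hs hp c hA (hA.inv h)
  rw [dOpM_congr (B := fun _ => 1) hs hp c (fun q hq => Matrix.mul_nonsing_inv _ (h q hq)),
    dOpM_const] at h1
  have h2 : (A p)⁻¹ * A p = 1 := Matrix.nonsing_inv_mul _ (h p hp)
  calc _ = ((A p)⁻¹ * A p) * dOpM c (fun q => (A q)⁻¹) p := by rw [h2, one_mul]
    _ = (A p)⁻¹ * (A p * dOpM c (fun q => (A q)⁻¹) p) := by rw [mul_assoc]
    _ = (A p)⁻¹ * (-(dOpM c A p * (A p)⁻¹)) := by
      congr 1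
      exact eq_neg_of_add_eq_zero_right h1.symm
    _ = _ := by rw [mul_neg, mul_assoc]

lemma dOpM_fromBlocks {ι' κ' : Type*} (c) (A : E → Matrix ι κ ℂ) (B : E → Matrix ι κ' ℂ)
    (C : E → Matrix ι' κ ℂ) (D : E → Matrix ι' κ' ℂ) :
    dOpM c (fun q => Matrix.fromBlocks (A q) (B q) (C q) (D q)) p =
      Matrix.fromBlocks (dOpM c A p) (dOpM c B p) (dOpM c C p) (dOpM c D p) := by
  ext a b
  rcases a with a | a <;> rcases b with b | b <;> rfl

lemma SmM.fromBlocks {ι' κ' : Type*} {A : E → Matrix ι κ ℂ} {B : E → Matrix ι κ' ℂ}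
    {C : E → Matrix ι' κ ℂ} {D : E → Matrix ι' κ' ℂ} (hA : SmM s A) (hB : SmM s B)
    (hC : SmM s C) (hD : SmM s D) :
    SmM s (fun q => Matrix.fromBlocks (A q) (B q) (C q) (D q)) := by
  intro a b
  rcases a with a | a <;> rcases b with b | b
  exacts [hA a b, hB a b, hC a b, hD a b]

/-- Derivatives of a triple product. -/
lemma dOpM_mul3 [Fintype ι] {A B C : E → Matrix ι ι ℂ} (hs : IsOpen s)
    (hp : p ∈ s) (c) (hA : SmM s A) (hB : SmM s B) (hC : SmM s C) :
    dOpM c (fun q => A q * B q * C q) p =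
      dOpM c A p * B p * C p + A p * dOpM c B p * C p + A p * B p * dOpM c C p := by
  rw [dOpM_mul hs hp c (hA.mul hB) hC, dOpM_mul hs hp c hA hB, add_mul]

lemma dOpM_mul3_snd [Fintype ι] {A B C : E → Matrix ι ι ℂ} (hs : IsOpen s)
    (hp : p ∈ s) (c d) (hA : SmM s A) (hB : SmM s B) (hC : SmM s C) :
    dOpM c (dOpM d (fun q => A q * B q * C q)) p =
      (dOpM c (dOpM d A) p * B p * C p + dOpM d A p * dOpM c B p * C p
        + dOpM d A p * B p * dOpM c C p)
      + (dOpM c A p * dOpM d B p * C p + A p * dOpM c (dOpM d B) p * C p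
        + A p * dOpM d B p * dOpM c C p)
      + (dOpM c A p * B p * dOpM d C p + A p * dOpM c B p * dOpM d C p
        + A p * B p * dOpM c (dOpM d C) p) := by
  have hAd := dOpM_smooth hs d hA
  have hBd := dOpM_smooth hs d hB
  have hCd := dOpM_smooth hs d hC
  rw [dOpM_congr hs hp c (fun q hq => dOpM_mul3 hs hq d hA hB hC),
    dOpM_add hs hp c (((hAd.mul hB).mul hC).add ((hA.mul hBd).mul hC)) ((hA.mul hB).mul hCd),
    dOpM_add hs hp c ((hAd.mul hB).mul hC) ((hA.mul hBd).mul hC),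
    dOpM_mul3 hs hp c hAd hB hC, dOpM_mul3 hs hp c hA hBd hC, dOpM_mul3 hs hp c hA hB hCd]

end general

/-- Ring identity for the curvature of `L D R`. -/
lemma curv_ring {A : Type*} [Ring A] (L D R Li Di Ri L1 L2 L12 D1 D2 D12 R1 R2 R12 : A)
    (hLi : Li * L = 1) (hD : D * Di = 1) (hDl : Di * D = 1) (hR : R * Ri = 1)
    (hL12 : L * L12 = L12) (hLL2 : L * L2 = L2) (hLiL2 : Li * L2 = L2)
    (hR1R : R1 * R = R1) (hR1Ri : R1 * Ri = R1) (hR12R : R12 * R = R12) (hRR : R1 * R2 = 0)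
    (hLL : L1 * L2 = 0) :
    -((L12 * D * R + L2 * D1 * R + L2 * D * R1) + (L1 * D2 * R + L * D12 * R + L * D2 * R1)
      + (L1 * D * R2 + L * D1 * R2 + L * D * R12))
      + (L1 * D * R + L * D1 * R + L * D * R1) * (Ri * Di * Li)
        * (L2 * D * R + L * D2 * R + L * D * R2)
    = L * (-D12 + D1 * Di * D2 + D1 * Di * L2 * D + D * R1 * Di * L2 * D + D * R1 * Di * D2
        - L12 * D - L2 * D1 - L2 * D * R1 - D2 * R1 - D * R12) * R := by
  have e1 : (L1 * D * R + L * D1 * R + L * D * R1) * (Ri * Di * Li)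
        * (L2 * D * R + L * D2 * R + L * D * R2)
      = (L1 * D * (R * Ri) + L * D1 * (R * Ri) + L * D * (R1 * Ri)) * Di
        * ((Li * L2) * D * R + (Li * L) * D2 * R + (Li * L) * D * R2) := by noncomm_ring
  rw [e1, hR, hR1Ri, hLi, hLiL2]
  have e2 : (L1 * D * 1 + L * D1 * 1 + L * D * R1) * Di * (L2 * D * R + 1 * D2 * R + 1 * D * R2)
      = L1 * (D * Di) * L2 * D * R + L1 * (D * Di) * D2 * R + L1 * (D * Di) * D * R2
        + L * D1 * Di * L2 * D * R + L * D1 * Di * D2 * R + L * D1 * (Di * D) * R2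
        + L * D * R1 * Di * L2 * D * R + L * D * R1 * Di * D2 * R
        + L * D * R1 * (Di * D) * R2 := by noncomm_ring
  rw [e2, hD, hDl]
  have e3 : L * D * R1 * 1 * R2 = 0 := by rw [mul_one, mul_assoc, hRR, mul_zero]
  have e4 : L1 * 1 * L2 * D * R = 0 := by rw [mul_one, hLL, zero_mul, zero_mul]
  rw [e3, e4]
  have e5 : L * (-D12 + D1 * Di * D2 + D1 * Di * L2 * D + D * R1 * Di * L2 * D + D * R1 * Di * D2
        - L12 * D - L2 * D1 - L2 * D * R1 - D2 * R1 - D * R12) * R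
      = - (L * D12 * R) + L * D1 * Di * D2 * R + L * D1 * Di * L2 * D * R
        + L * D * R1 * Di * L2 * D * R + L * D * R1 * Di * D2 * R
        - (L * L12) * D * R - (L * L2) * D1 * R - (L * L2) * D * (R1 * R) - L * D2 * (R1 * R)
        - L * D * (R12 * R) := by noncomm_ring
  rw [e5, hL12, hLL2, hR1R, hR12R]
  noncomm_ring

section pluri

variable {n : ℕ}

/-- Operator of `wdP`. -/
def opW (i : Fin n) : (ℂ × ℂ) × ((ℝ × (Fin n → ℂ)) × (ℝ × (Fin n → ℂ))) :=
  ((1 / 2, - Complex.I / 2), ((0, Pi.single i 1), (0, Pi.single i Complex.I)))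

/-- Operator of `wdbP`. -/
def opB (i : Fin n) : (ℂ × ℂ) × ((ℝ × (Fin n → ℂ)) × (ℝ × (Fin n → ℂ))) :=
  ((1 / 2, Complex.I / 2), ((0, Pi.single i 1), (0, Pi.single i Complex.I)))

/-- Operator of `dtP`. -/
def opT (n : ℕ) : (ℂ × ℂ) × ((ℝ × (Fin n → ℂ)) × (ℝ × (Fin n → ℂ))) :=
  ((1, 0), ((1, 0), (1, 0)))

lemma wdP_eq (i : Fin n) : wdP i = dOp (opW i) := by
  funext f p
  simp only [wdP, dOp, opW]
  ring

lemma wdbP_eq (i : Fin n) : wdbP i = dOp (opB i) := by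
  funext f p
  simp only [wdbP, dOp, opB]
  ring

lemma dtP_eq : dtP (n := n) = dOp (opT n) := by
  funext f p
  simp only [dtP, dOp, opT]
  ring

lemma cjOp_opW (i : Fin n) : cjOp (opW i) = opB i := by
  simp [cjOp, opW, opB, map_ofNat]

lemma cjOp_opB (i : Fin n) : cjOp (opB i) = opW i := by
  simp [cjOp, opW, opB, map_ofNat]

lemma cjOp_opT : cjOp (opT n) = opT n := by
  simp [cjOp, opT]

/-- Matrix form of the Chern curvature. -/
lemma traceChernP_eq {ι : Type*} [Fintype ι] [DecidableEq ι]
    (g : ℝ × (Fin n → ℂ) → Matrix (Fin n) (Fin n) ℂ)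
    (h : ℝ × (Fin n → ℂ) → Matrix ι ι ℂ) (p : ℝ × (Fin n → ℂ)) (a b : ι) :
    traceChernP g h a b p = (∑ i : Fin n, ∑ j : Fin n, (g p)⁻¹ j i •
      (- dOpM (opW i) (dOpM (opB j) h) p
        + dOpM (opW i) h p * (h p)⁻¹ * dOpM (opB j) h p)) a b := by
  simp only [traceChernP, chernP, Matrix.sum_apply, Matrix.smul_apply, Matrix.add_apply,
    Matrix.neg_apply, smul_eq_mul, Matrix.mul_apply, wdP_eq, wdbP_eq]
  refine Finset.sum_congr rfl fun i _ => Finset.sum_congr rfl fun j _ => ?_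
  congr 2
  rw [Finset.sum_comm]
  refine Finset.sum_congr rfl fun d _ => ?_
  rw [Finset.sum_mul]
  rfl

lemma fromBlocks_sum_fin {σ : Type*} (t : Finset σ) {m : Type*} (A B C D : σ → Matrix m m ℂ) :
    ∑ i ∈ t, Matrix.fromBlocks (A i) (B i) (C i) (D i) =
      Matrix.fromBlocks (∑ i ∈ t, A i) (∑ i ∈ t, B i) (∑ i ∈ t, C i) (∑ i ∈ t, D i) := by
  ext a b
  rcases a with a | a <;> rcases b with b | b <;> simp [Matrix.sum_apply]

/-- Block form of the curvature in the adapted frame. -/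
lemma block_curv {m : Type*} [Fintype m] [DecidableEq m]
    (g K H Hi g1 g2 g12 b2 b12 c1 c12 H1 H2 H12 : Matrix m m ℂ) :
    -(fromBlocks g12 0 0 H12) + fromBlocks g1 0 0 H1 * fromBlocks K 0 0 Hi * fromBlocks g2 0 0 H2
      + fromBlocks g1 0 0 H1 * fromBlocks K 0 0 Hi * fromBlocks 0 b2 0 0 * fromBlocks g 0 0 H
      + fromBlocks g 0 0 H * fromBlocks 0 0 c1 0 * fromBlocks K 0 0 Hi * fromBlocks 0 b2 0 0
        * fromBlocks g 0 0 H
      + fromBlocks g 0 0 H * fromBlocks 0 0 c1 0 * fromBlocks K 0 0 Hi * fromBlocks g2 0 0 H2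
      - fromBlocks 0 b12 0 0 * fromBlocks g 0 0 H - fromBlocks 0 b2 0 0 * fromBlocks g1 0 0 H1
      - fromBlocks 0 b2 0 0 * fromBlocks g 0 0 H * fromBlocks 0 0 c1 0
      - fromBlocks g2 0 0 H2 * fromBlocks 0 0 c1 0 - fromBlocks g 0 0 H * fromBlocks 0 0 c12 0
    = fromBlocks (-g12 + g1 * K * g2 - b2 * H * c1) (g1 * K * b2 * H - b12 * H - b2 * H1)
      (H * c1 * K * g2 - H2 * c1 - H * c12)
      (-H12 + H1 * Hi * H2 + H * c1 * K * b2 * H) := by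
  simp only [sub_eq_add_neg, Matrix.fromBlocks_multiply, Matrix.fromBlocks_add,
    Matrix.fromBlocks_neg, Matrix.mul_zero, Matrix.zero_mul, add_zero, zero_add, neg_zero]

lemma sum4_swap (F : Fin n → Fin n → Fin n → Fin n → ℂ) :
    ∑ k, ∑ l, ∑ m, ∑ r, F k l m r = ∑ m, ∑ r, ∑ k, ∑ l, F k l m r := by
  calc ∑ k, ∑ l, ∑ m, ∑ r, F k l m r = ∑ k, ∑ m, ∑ l, ∑ r, F k l m r :=
        Finset.sum_congr rfl fun k _ => Finset.sum_comm
    _ = ∑ m, ∑ k, ∑ l, ∑ r, F k l m r := Finset.sum_comm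
    _ = ∑ m, ∑ k, ∑ r, ∑ l, F k l m r :=
        Finset.sum_congr rfl fun m _ => Finset.sum_congr rfl fun k _ => Finset.sum_comm
    _ = ∑ m, ∑ r, ∑ k, ∑ l, F k l m r :=
        Finset.sum_congr rfl fun m _ => Finset.sum_comm

lemma conjT_transpose {m k : Type*} (A : Matrix m k ℂ) : Aᵀᴴ = Aᴴᵀ := rfl

/-- The four block identities at a point. -/
lemma block_flow (g K g0 b0 : Matrix (Fin n) (Fin n) ℂ) (g1 g2 b2 : Fin n → Matrix (Fin n) (Fin n) ℂ)
    (g12 b12 : Fin n → Fin n → Matrix (Fin n) (Fin n) ℂ)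
    (hKg : K * g = 1) (hKH : Kᴴ = K)
    (hg2 : ∀ i, g2 i = (g1 i)ᴴ) (hb2 : ∀ i, (b2 i)ᵀ = - b2 i)
    (hg0 : g0 = ∑ i : Fin n, ∑ j : Fin n, K j i •
      (g12 i j - g1 i * K * g2 j + b2 j * Kᵀ * (b2 i)ᴴ))
    (hb0 : b0 = ∑ i : Fin n, ∑ j : Fin n, K j i •
      (b12 i j - g1 i * K * b2 j - b2 j * Kᵀ * (g1 i)ᵀ)) :
    fromBlocks g0 (b0 * Kᵀ) (Kᵀ * b0ᴴ) (-(K * g0 * K))ᵀ =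
    - ∑ i : Fin n, ∑ j : Fin n, K j i •
      fromBlocks (-g12 i j + g1 i * K * g2 j - b2 j * Kᵀ * (b2 i)ᴴ)
        (g1 i * K * b2 j * Kᵀ - b12 i j * Kᵀ - b2 j * (-(K * g1 i * K))ᵀ)
        (Kᵀ * (b2 i)ᴴ * K * g2 j - (-(K * g2 j * K))ᵀ * (b2 i)ᴴ - Kᵀ * (b12 j i)ᴴ)
        (-(K * g1 i * K * g2 j * K - K * g12 i j * K + K * g2 j * K * g1 i * K)ᵀ
          + (-(K * g1 i * K))ᵀ * gᵀ * (-(K * g2 j * K))ᵀ + Kᵀ * (b2 i)ᴴ * K * b2 j * Kᵀ) := by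
  simp only [Matrix.fromBlocks_smul, fromBlocks_sum_fin, Matrix.fromBlocks_neg]
  have hKc : ∀ i j, star (K i j) = K j i := fun i j => by
    conv_rhs => rw [← hKH]
    rfl
  have hKT : Kᵀᴴ = Kᵀ := by
    rw [conjT_transpose, hKH]
  have h12 : b0 * Kᵀ = - ∑ i : Fin n, ∑ j : Fin n, K j i •
      (g1 i * K * b2 j * Kᵀ - b12 i j * Kᵀ - b2 j * (-(K * g1 i * K))ᵀ) := by
    rw [hb0]
    simp only [Finset.sum_mul, ← Finset.sum_neg_distrib]
    refine Finset.sum_congr rfl fun i _ => Finset.sum_congr rfl fun j _ => ?_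
    rw [Matrix.smul_mul, ← smul_neg]
    congr 1
    simp only [Matrix.transpose_neg, Matrix.transpose_mul]
    noncomm_ring
  congr 1
  · rw [hg0]
    simp only [← Finset.sum_neg_distrib]
    refine Finset.sum_congr rfl fun i _ => Finset.sum_congr rfl fun j _ => ?_
    rw [← smul_neg]
    congr 1
    abel
  · have h := congrArg Matrix.conjTranspose h12
    rw [Matrix.conjTranspose_mul, hKT] at h
    rw [h, Finset.sum_comm]
    simp only [Matrix.conjTranspose_neg, Matrix.conjTranspose_sum, Matrix.conjTranspose_smul]
    congr 1
    refine Finset.sum_congr rfl fun i _ => Finset.sum_congr rfl fun j _ => ?_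
    rw [hKc]
    congr 1
    have hx : (g1 j)ᵀᴴ = (g2 j)ᵀ := by
      rw [hg2, conjT_transpose]
    simp only [Matrix.conjTranspose_sub, Matrix.conjTranspose_mul, Matrix.transpose_neg,
      Matrix.conjTranspose_neg, Matrix.transpose_mul, hKT, hKH, hx, hg2]
    noncomm_ring
  · rw [hg0]
    simp only [Finset.mul_sum, Finset.sum_mul, ← Finset.sum_neg_distrib, Matrix.transpose_sum]
    refine Finset.sum_congr rfl fun i _ => Finset.sum_congr rfl fun j _ => ?_
    rw [Matrix.mul_smul, Matrix.smul_mul, ← smul_neg, ← smul_neg, Matrix.transpose_smul]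
    congr 1
    have hc : (b2 i)ᴴᵀ = - (b2 i)ᴴ := by
      rw [← conjT_transpose, hb2, Matrix.conjTranspose_neg]
    have hsq : b2 j * Kᵀ * (b2 i)ᴴ = ((b2 i)ᴴ * K * b2 j)ᵀ := by
      rw [Matrix.transpose_mul, Matrix.transpose_mul, hc, hb2]
      noncomm_ring
    rw [hsq]
    have hm : (K * g1 i * K)ᵀ * gᵀ * (K * g2 j * K)ᵀ = (K * g2 j * K * g1 i * K)ᵀ := by
      rw [← Matrix.transpose_mul, ← Matrix.transpose_mul]
      congr 1
      have : K * g2 j * K * (g * (K * g1 i * K)) = K * g2 j * (K * g) * K * g1 i * K := by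
        noncomm_ring
      rw [this, hKg, mul_one]
    have hmm : (-(K * g1 i * K))ᵀ * gᵀ * (-(K * g2 j * K))ᵀ = (K * g2 j * K * g1 i * K)ᵀ := by
      rw [← hm]
      simp only [Matrix.transpose_neg]
      noncomm_ring
    have hl : Kᵀ * (b2 i)ᴴ * K * b2 j * Kᵀ = (K * ((b2 i)ᴴ * K * b2 j)ᵀ * K)ᵀ := by
      rw [Matrix.transpose_mul, Matrix.transpose_mul, Matrix.transpose_transpose]
      noncomm_ring
    rw [hmm, hl, ← Matrix.transpose_neg, ← Matrix.transpose_add, ← Matrix.transpose_add,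
      ← Matrix.transpose_neg]
    congr 1
    noncomm_ring

end pluri

/-- under pluriclosed flow (`∂ₜg = −S^g + T²`, `∂ₜβ = Δ_gβ`, with `β` a
torsion potential for `g`), the generalized metric evolves by `∂ₜG_{AB̄} = −S_{AB̄}`. -/
theorem genMetric_evolution {n : ℕ} (hn : 0 < n)
    (I : Set ℝ) (hI : IsOpen I) (U : Set (Fin n → ℂ)) (hU : IsOpen U)
    (g β : ℝ × (Fin n → ℂ) → Matrix (Fin n) (Fin n) ℂ)
    (hgC : ∀ a b : Fin n, ContDiffOn ℝ (⊤ : ℕ∞) (fun q => g q a b) (I ×ˢ U))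
    (hβC : ∀ a b : Fin n, ContDiffOn ℝ (⊤ : ℕ∞) (fun q => β q a b) (I ×ˢ U))
    (hg : ∀ p ∈ I ×ˢ U, (g p).PosDef)
    (hβ : ∀ p ∈ I ×ˢ U, (β p)ᵀ = -(β p))
    (hpot : ∀ p ∈ I ×ˢ U, ∀ i j k : Fin n, wdbP k (fun q => β q i j) p = torsionP g i j k p)
    (hflowg : ∀ p ∈ I ×ˢ U, ∀ i j : Fin n,
      dtP (fun q => g q i j) p = - traceChernP g g i j p + torsionSqP g i j p)
    (hflowβ : ∀ p ∈ I ×ˢ U, ∀ i j : Fin n,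
      dtP (fun q => β q i j) p = lapBetaP g β i j p) :
    ∀ p ∈ I ×ˢ U, ∀ A B : Fin n ⊕ Fin n,
      dtP (fun q => genMetric (g q) (β q) A B) p =
        - traceChernP g (fun q => genMetric (g q) (β q)) A B p := by
  intro p hp A B
  have hs : IsOpen (I ×ˢ U) := hI.prod hU
  have hgS : SmM (I ×ˢ U) g := hgC
  have hβS : SmM (I ×ˢ U) β := hβC
  have hdet : ∀ q ∈ I ×ˢ U, IsUnit (g q).det := fun q hq =>
    (Matrix.isUnit_iff_isUnit_det _).1 (hg q hq).isUnit
  have hKS : SmM (I ×ˢ U) (fun q => (g q)⁻¹) := hgS.inv hdet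
  have hgH : ∀ q ∈ I ×ˢ U, (g q)ᴴ = g q := fun q hq => (hg q hq).isHermitian
  have hKH : ∀ q ∈ I ×ˢ U, ((g q)⁻¹)ᴴ = (g q)⁻¹ := fun q hq => by
    rw [Matrix.conjTranspose_nonsing_inv, hgH q hq]
  -- the factors
  set L : ℝ × (Fin n → ℂ) → Matrix (Fin n ⊕ Fin n) (Fin n ⊕ Fin n) ℂ :=
    fun q => fromBlocks 1 (β q) 0 1 with hL
  set D : ℝ × (Fin n → ℂ) → Matrix (Fin n ⊕ Fin n) (Fin n ⊕ Fin n) ℂ :=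
    fun q => fromBlocks (g q) 0 0 ((g q)⁻¹)ᵀ with hD
  set R : ℝ × (Fin n → ℂ) → Matrix (Fin n ⊕ Fin n) (Fin n ⊕ Fin n) ℂ :=
    fun q => fromBlocks 1 0 (β q)ᴴ 1 with hR
  have hLS : SmM (I ×ˢ U) L := (smM_const 1).fromBlocks hβS (smM_const 0) (smM_const 1)
  have hDS : SmM (I ×ˢ U) D := hgS.fromBlocks (smM_const 0) (smM_const 0) hKS.transpose
  have hRS : SmM (I ×ˢ U) R :=
    (smM_const 1).fromBlocks (smM_const 0) hβS.conjTranspose (smM_const 1)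
  have hG : ∀ q ∈ I ×ˢ U, genMetric (g q) (β q) = L q * D q * R q := by
    intro q hq
    have hc : ((g q)⁻¹).map (starRingEnd ℂ) = ((g q)⁻¹)ᵀ := by
      conv_rhs => rw [← hKH q hq]
      rfl
    simp only [genMetric, hc, hL, hD, hR, Matrix.fromBlocks_multiply, Matrix.mul_zero,
      Matrix.zero_mul, add_zero, zero_add, Matrix.mul_one, Matrix.one_mul]
  -- derivatives of the factors
  have dL : ∀ c, ∀ q, dOpM c L q = fromBlocks 0 (dOpM c β q) 0 0 := fun c q => by
    rw [hL, dOpM_fromBlocks, dOpM_const, dOpM_const]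
  have dLL : ∀ c d, dOpM c (dOpM d L) p = fromBlocks 0 (dOpM c (dOpM d β) p) 0 0 := fun c d => by
    rw [dOpM_congr hs hp c (fun q _ => dL d q), dOpM_fromBlocks, dOpM_const]
  have dR : ∀ c, ∀ q ∈ I ×ˢ U, dOpM c R q = fromBlocks 0 0 (dOpM (cjOp c) β q)ᴴ 0 :=
    fun c q hq => by
      rw [hR, dOpM_fromBlocks, dOpM_const, dOpM_const, dOpM_conjTranspose hs hq c hβS]
  have dRR : ∀ c d, dOpM c (dOpM d R) p =
      fromBlocks 0 0 (dOpM (cjOp c) (dOpM (cjOp d) β) p)ᴴ 0 := fun c d => by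
    rw [dOpM_congr hs hp c (fun q hq => dR d q hq), dOpM_fromBlocks, dOpM_const,
      dOpM_conjTranspose hs hp c (dOpM_smooth hs _ hβS)]
  have dK : ∀ c, ∀ q ∈ I ×ˢ U, dOpM c (fun q => ((g q)⁻¹)ᵀ) q =
      (-((g q)⁻¹ * dOpM c g q * (g q)⁻¹))ᵀ := fun c q hq => by
    rw [dOpM_transpose, dOpM_inv hs hq c hgS hdet]
  have dKK : ∀ c d, dOpM c (dOpM d (fun q => ((g q)⁻¹)ᵀ)) p =
      ((g p)⁻¹ * dOpM c g p * (g p)⁻¹ * dOpM d g p * (g p)⁻¹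
        - (g p)⁻¹ * dOpM c (dOpM d g) p * (g p)⁻¹
        + (g p)⁻¹ * dOpM d g p * (g p)⁻¹ * dOpM c g p * (g p)⁻¹)ᵀ := fun c d => by
    rw [dOpM_congr hs hp c (fun q hq => dK d q hq), dOpM_transpose, dOpM_neg,
      dOpM_mul3 hs hp c hKS (dOpM_smooth hs d hgS) hKS, dOpM_inv hs hp c hgS hdet]
    congr 1
    noncomm_ring
  have dD : ∀ c, ∀ q ∈ I ×ˢ U, dOpM c D q = fromBlocks (dOpM c g q) 0 0
      (-((g q)⁻¹ * dOpM c g q * (g q)⁻¹))ᵀ := fun c q hq => by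
    rw [hD, dOpM_fromBlocks, dOpM_const, dK c q hq]
  have dDD : ∀ c d, dOpM c (dOpM d D) p = fromBlocks (dOpM c (dOpM d g) p) 0 0
      (dOpM c (dOpM d (fun q => ((g q)⁻¹)ᵀ)) p) := fun c d => by
    rw [hD, dOpM_congr hs hp c (fun q _ => dOpM_fromBlocks d g (fun _ => 0) (fun _ => 0)
      (fun q => ((g q)⁻¹)ᵀ)), dOpM_fromBlocks, dOpM_congr (B := fun _ => 0) hs hp c
      (fun q _ => dOpM_const d 0), dOpM_const]
  -- pointwise inverses
  have hgK : g p * (g p)⁻¹ = 1 := Matrix.mul_nonsing_inv _ (hdet p hp)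
  have hKg : (g p)⁻¹ * g p = 1 := Matrix.nonsing_inv_mul _ (hdet p hp)
  have hHH : ((g p)⁻¹)ᵀ * (g p)ᵀ = 1 := by
    rw [← Matrix.transpose_mul, hgK, Matrix.transpose_one]
  have hHHt : (g p)ᵀ * ((g p)⁻¹)ᵀ = 1 := by
    rw [← Matrix.transpose_mul, hKg, Matrix.transpose_one]
  have hLi : fromBlocks 1 (-(β p)) 0 1 * L p = 1 := by
    simp [hL, Matrix.fromBlocks_multiply, ← Matrix.fromBlocks_one]
  have hRi : R p * fromBlocks 1 0 (-(β p)ᴴ) 1 = 1 := by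
    simp [hR, Matrix.fromBlocks_multiply, ← Matrix.fromBlocks_one]
  have hDi : D p * fromBlocks (g p)⁻¹ 0 0 (g p)ᵀ = 1 := by
    simp only [hD, Matrix.fromBlocks_multiply, ← Matrix.fromBlocks_one, hgK, hHH]
    simp
  have hDiL : fromBlocks (g p)⁻¹ 0 0 (g p)ᵀ * D p = 1 := by
    simp only [hD, Matrix.fromBlocks_multiply, ← Matrix.fromBlocks_one, hKg, hHHt]
    simp
  have hinv : (L p * D p * R p)⁻¹ = fromBlocks 1 0 (-(β p)ᴴ) 1 *
      fromBlocks (g p)⁻¹ 0 0 (g p)ᵀ * fromBlocks 1 (-(β p)) 0 1 := by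
    rw [Matrix.mul_inv_rev, Matrix.mul_inv_rev, Matrix.inv_eq_right_inv hRi,
      Matrix.inv_eq_right_inv hDi, Matrix.inv_eq_left_inv hLi, mul_assoc]
  -- curvature
  have hcurv : ∀ i j, - dOpM (opW i) (dOpM (opB j) (fun q => L q * D q * R q)) p
        + dOpM (opW i) (fun q => L q * D q * R q) p * (L p * D p * R p)⁻¹
          * dOpM (opB j) (fun q => L q * D q * R q) p
      = L p * fromBlocks
        (-dOpM (opW i) (dOpM (opB j) g) p + dOpM (opW i) g p * (g p)⁻¹ * dOpM (opB j) g p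
          - dOpM (opB j) β p * ((g p)⁻¹)ᵀ * (dOpM (opB i) β p)ᴴ)
        (dOpM (opW i) g p * (g p)⁻¹ * dOpM (opB j) β p * ((g p)⁻¹)ᵀ
          - dOpM (opW i) (dOpM (opB j) β) p * ((g p)⁻¹)ᵀ
          - dOpM (opB j) β p * (-((g p)⁻¹ * dOpM (opW i) g p * (g p)⁻¹))ᵀ)
        (((g p)⁻¹)ᵀ * (dOpM (opB i) β p)ᴴ * (g p)⁻¹ * dOpM (opB j) g p
          - (-((g p)⁻¹ * dOpM (opB j) g p * (g p)⁻¹))ᵀ * (dOpM (opB i) β p)ᴴ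
          - ((g p)⁻¹)ᵀ * (dOpM (opW j) (dOpM (opB i) β) p)ᴴ)
        (-((g p)⁻¹ * dOpM (opW i) g p * (g p)⁻¹ * dOpM (opB j) g p * (g p)⁻¹
          - (g p)⁻¹ * dOpM (opW i) (dOpM (opB j) g) p * (g p)⁻¹
          + (g p)⁻¹ * dOpM (opB j) g p * (g p)⁻¹ * dOpM (opW i) g p * (g p)⁻¹)ᵀ
          + (-((g p)⁻¹ * dOpM (opW i) g p * (g p)⁻¹))ᵀ * (g p)ᵀ
            * (-((g p)⁻¹ * dOpM (opB j) g p * (g p)⁻¹))ᵀ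
          + ((g p)⁻¹)ᵀ * (dOpM (opB i) β p)ᴴ * (g p)⁻¹ * dOpM (opB j) β p * ((g p)⁻¹)ᵀ)
        * R p := by
    intro i j
    rw [hinv, dOpM_mul3_snd hs hp _ _ hLS hDS hRS, dOpM_mul3 hs hp _ hLS hDS hRS,
      dOpM_mul3 hs hp _ hLS hDS hRS, curv_ring _ _ _ _ _ _ _ _ _ _ _ _ _ _ _ hLi hDi hDiL hRi]
    · rw [dLL, dRR, dDD, dL, dR _ p hp, dD _ p hp, dD _ p hp, dKK, cjOp_opW, cjOp_opB,
        ← dOpM_comm hs hp (opW j) (opB i) hβS, ← block_curv]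
    · rw [dLL]
      simp [hL, Matrix.fromBlocks_multiply]
    · rw [dL]
      simp [hL, Matrix.fromBlocks_multiply]
    · simp [dL, Matrix.fromBlocks_multiply]
    · rw [dR _ p hp]
      simp [hR, Matrix.fromBlocks_multiply]
    · simp [dR _ p hp, Matrix.fromBlocks_multiply]
    · rw [dRR]
      simp [hR, Matrix.fromBlocks_multiply]
    · simp [dR _ p hp, Matrix.fromBlocks_multiply]
    · simp [dL, Matrix.fromBlocks_multiply]
  -- the flow equations in matrix form
  have hg2 : ∀ i, dOpM (opB i) g p = (dOpM (opW i) g p)ᴴ := fun i => by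
    rw [← cjOp_opB, ← dOpM_conjTranspose hs hp (opB i) hgS]
    exact dOpM_congr hs hp _ (fun q hq => (hgH q hq).symm)
  have hb2 : ∀ i, (dOpM (opB i) β p)ᵀ = - dOpM (opB i) β p := fun i => by
    rw [← dOpM_transpose, ← dOpM_neg]
    exact dOpM_congr hs hp _ hβ
  have hg0 : dOpM (opT n) g p = ∑ i : Fin n, ∑ j : Fin n, (g p)⁻¹ j i •
      (dOpM (opW i) (dOpM (opB j) g) p - dOpM (opW i) g p * (g p)⁻¹ * dOpM (opB j) g p
        + dOpM (opB j) β p * ((g p)⁻¹)ᵀ * (dOpM (opB i) β p)ᴴ) := by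
    have hsq : ∀ a b, torsionSqP g a b p = (∑ i : Fin n, ∑ j : Fin n, (g p)⁻¹ j i •
        (dOpM (opB j) β p * ((g p)⁻¹)ᵀ * (dOpM (opB i) β p)ᴴ)) a b := by
      intro a b
      have hT : ∀ i j k, torsionP g i j k p = dOpM (opB k) β p i j := fun i j k => by
        rw [← hpot p hp, wdbP_eq]
        rfl
      simp only [torsionSqP, hT, Matrix.sum_apply, Matrix.smul_apply, smul_eq_mul,
        Matrix.mul_apply, Matrix.transpose_apply, Matrix.conjTranspose_apply, Finset.mul_sum,
        Finset.sum_mul]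
      rw [sum4_swap]
      refine Finset.sum_congr rfl fun i _ => Finset.sum_congr rfl fun j _ =>
        Finset.sum_congr rfl fun k _ => Finset.sum_congr rfl fun l _ => ?_
      rw [starRingEnd_apply]
      ring
    have h : dOpM (opT n) g p = -(∑ i : Fin n, ∑ j : Fin n, (g p)⁻¹ j i •
      (- dOpM (opW i) (dOpM (opB j) g) p
        + dOpM (opW i) g p * (g p)⁻¹ * dOpM (opB j) g p))
      + ∑ i : Fin n, ∑ j : Fin n, (g p)⁻¹ j i •
        (dOpM (opB j) β p * ((g p)⁻¹)ᵀ * (dOpM (opB i) β p)ᴴ) := by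
      ext a b
      have := hflowg p hp a b
      rw [traceChernP_eq, hsq, dtP_eq] at this
      exact this
    rw [h, ← Finset.sum_neg_distrib, ← Finset.sum_add_distrib]
    refine Finset.sum_congr rfl fun i _ => ?_
    rw [← Finset.sum_neg_distrib, ← Finset.sum_add_distrib]
    refine Finset.sum_congr rfl fun j _ => ?_
    rw [← smul_neg, ← smul_add]
    congr 1
    abel
  have hb0 : dOpM (opT n) β p = ∑ i : Fin n, ∑ j : Fin n, (g p)⁻¹ j i •
      (dOpM (opW i) (dOpM (opB j) β) p - dOpM (opW i) g p * (g p)⁻¹ * dOpM (opB j) β p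
        - dOpM (opB j) β p * ((g p)⁻¹)ᵀ * (dOpM (opW i) g p)ᵀ) := by
    ext a b
    have := hflowβ p hp a b
    rw [dtP_eq] at this
    refine Eq.trans this ?_
    simp only [lapBetaP, nabla2betaP, wdP_eq, wdbP_eq, Matrix.sum_apply, Matrix.smul_apply,
      smul_eq_mul, Matrix.sub_apply, Matrix.mul_apply, Matrix.transpose_apply, Finset.sum_mul]
    refine Finset.sum_congr rfl fun i _ => Finset.sum_congr rfl fun j _ => ?_
    congr 2
    · congr 1
      rw [Finset.sum_comm]
      refine Finset.sum_congr rfl fun k _ => Finset.sum_congr rfl fun l _ => ?_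
      rw [mul_comm ((g p)⁻¹ _ _)]
      rfl
    · refine Finset.sum_congr rfl fun k _ => Finset.sum_congr rfl fun l _ => ?_
      simp only [dOpM, Matrix.of_apply]
      ring
  have key := block_flow (g p) (g p)⁻¹ (dOpM (opT n) g p) (dOpM (opT n) β p)
    (fun i => dOpM (opW i) g p) (fun i => dOpM (opB i) g p) (fun i => dOpM (opB i) β p)
    (fun i j => dOpM (opW i) (dOpM (opB j) g) p) (fun i j => dOpM (opW i) (dOpM (opB j) β) p)
    hKg (hKH p hp) hg2 hb2 hg0 hb0
  -- conclusion
  have hdt : dOpM (opT n) (fun q => L q * D q * R q) p = L p * fromBlocks (dOpM (opT n) g p)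
      (dOpM (opT n) β p * ((g p)⁻¹)ᵀ) (((g p)⁻¹)ᵀ * (dOpM (opT n) β p)ᴴ)
      (-((g p)⁻¹ * dOpM (opT n) g p * (g p)⁻¹))ᵀ * R p := by
    rw [dOpM_mul3 hs hp _ hLS hDS hRS, dL, dR _ p hp, dD _ p hp, cjOp_opT]
    simp only [hL, hD, hR, Matrix.fromBlocks_multiply, Matrix.fromBlocks_add, Matrix.mul_zero,
      Matrix.zero_mul, add_zero, zero_add, Matrix.mul_one, Matrix.one_mul]
    congr 1 <;> noncomm_ring
  have hfin : dOpM (opT n) (fun q => L q * D q * R q) p =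
      - ∑ i : Fin n, ∑ j : Fin n, (g p)⁻¹ j i •
        (- dOpM (opW i) (dOpM (opB j) (fun q => L q * D q * R q)) p
        + dOpM (opW i) (fun q => L q * D q * R q) p * (L p * D p * R p)⁻¹
          * dOpM (opB j) (fun q => L q * D q * R q) p) := by
    rw [hdt, key]
    simp only [hcurv, Matrix.mul_neg, Matrix.neg_mul, Finset.mul_sum, Finset.sum_mul,
      Matrix.mul_smul, Matrix.smul_mul]
  have hLHS : dOpM (opT n) (fun q => genMetric (g q) (β q)) p
      = dOpM (opT n) (fun q => L q * D q * R q) p := dOpM_congr hs hp _ hG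
  have hdd : ∀ c, ∀ q ∈ I ×ˢ U, dOpM c (fun q => genMetric (g q) (β q)) q
      = dOpM c (fun q => L q * D q * R q) q := fun c q hq => dOpM_congr hs hq _ hG
  rw [traceChernP_eq, dtP_eq]
  change dOpM (opT n) (fun q => genMetric (g q) (β q)) p A B = _
  rw [hLHS, hfin, Matrix.neg_apply]
  refine congrArg (fun M : Matrix (Fin n ⊕ Fin n) (Fin n ⊕ Fin n) ℂ => - M A B) ?_
  refine Finset.sum_congr rfl fun i _ => Finset.sum_congr rfl fun j _ => ?_
  rw [hdd _ p hp, hdd _ p hp, hG p hp, dOpM_congr hs hp (opW i) (hdd (opB j))]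
end
end
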